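/- Integrability of the E-potential integrand: Let T > 0, let φ : (0,T] → ℝ be such that t ↦ t^{1−α_m} φ(t) extends to a continuous function on [0,T], and let s : [0,T] → ℝ be continuous. Then for every t ∈ (0,T] and every x ∈ ℝ with x ≠ s(t), the function τ ↦ φ(τ) E(x − s(τ), t − τ) is Lebesgue integrable on (0,t), and moreover ∫₀^t |φ(τ) E(x − s(τ), t − τ)| dτ ≤ C · (sup_{t ∈ (0,T)} |t^{1−α_m} φ(t)|) · t^{3α_m/2 − 1} B(α_m, α_m/2) for a constant C > 0 independent of x, t and φ, where B denotes the Euler Beta function. -/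

import Mathlib

open MeasureTheory Real Filter Set Topology intervalIntegral

/-- The Wright function `W(z; -β, δ) = ∑ z^k/(k! Γ(δ - βk))`, with `1/Γ` the
entire reciprocal Gamma function (here `Real.Gamma` vanishes at nonpositive
integers, so division gives the correct value `0`). -/
noncomputable def wrightW (β δ z : ℝ) : ℝ :=
  ∑' k : ℕ, z ^ k / (k.factorial * Real.Gamma (δ - β * k))

/-- Laplace convolution on `(0, ∞)`. -/
noncomputable def laplaceConv (f g : ℝ → ℝ) : ℝ → ℝ :=
  fun t => ∫ τ in (0:ℝ)..t, f τ * g (t - τ)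

/-- Iterated Laplace convolution `h₀ ∗ h₁ ∗ ⋯ ∗ hₙ`. -/
noncomputable def iterConv : (n : ℕ) → (Fin (n + 1) → ℝ → ℝ) → ℝ → ℝ
  | 0, h => h 0
  | n + 1, h => laplaceConv (iterConv n (fun i => h i.castSucc)) (h (Fin.last (n + 1)))

/-- `S^μ_m(t; -ℓ₁, …, -ℓ_m; -α₁, …, -α_m)` with the decomposition `μ₁ = μ`,
`μ_j = 0` for `j ≥ 2`: the Laplace convolution of
`h_j(t) = t^{μ_j - 1} W(-ℓ_j t^{-α_j}; -α_j, μ_j)`.  Indices run over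
`Fin (n+1)`, i.e. the number of terms is `m = n + 1 ≥ 1`. -/
noncomputable def Sconv (n : ℕ) (μ : ℝ) (α ℓ : Fin (n + 1) → ℝ) : ℝ → ℝ :=
  iterConv n (fun j t =>
    t ^ ((if j = 0 then μ else 0) - 1) *
      wrightW (α j) (if j = 0 then μ else 0) (-(ℓ j) * t ^ (-(α j))))

/-- `Γ^μ₁(x,t)`. -/
noncomputable def Gam1 (n : ℕ) (α lam : Fin (n + 1) → ℝ) (μ x t : ℝ) : ℝ :=
  (4 * Real.pi) ^ (-(1/2 : ℝ)) *
    ∫ p in Set.Ioi (0:ℝ),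
      p ^ (-(1/2 : ℝ)) * Real.exp (-(|x| ^ 2) / (4 * p)) *
        Sconv n μ α (fun j => lam j * p) t

/-- The kernel `E(x,t) = Γ⁰₁(x,t)`. -/
noncomputable def kerE (n : ℕ) (α lam : Fin (n + 1) → ℝ) (x t : ℝ) : ℝ :=
  Gam1 n α lam 0 x t

/-- `E_x`, the spatial derivative of `E`. -/
noncomputable def kerEx (n : ℕ) (α lam : Fin (n + 1) → ℝ) (x t : ℝ) : ℝ :=
  deriv (fun y => kerE n α lam y t) x

/-- `E_xx`, the second spatial derivative of `E`. -/
noncomputable def kerExx (n : ℕ) (α lam : Fin (n + 1) → ℝ) (x t : ℝ) : ℝ :=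
  deriv (fun y => kerEx n α lam y t) x

/-- The kernel `Z(x,t) = ∑ₖ λₖ Γ^{1-αₖ}₁(x,t)`. -/
noncomputable def kerZ (n : ℕ) (α lam : Fin (n + 1) → ℝ) (x t : ℝ) : ℝ :=
  ∑ k : Fin (n + 1), lam k * Gam1 n α lam (1 - α k) x t

/-- `Z_x`, the spatial derivative of `Z`. -/
noncomputable def kerZx (n : ℕ) (α lam : Fin (n + 1) → ℝ) (x t : ℝ) : ℝ :=
  deriv (fun y => kerZ n α lam y t) x

/-- `Z_xx`, the second spatial derivative of `Z`. -/
noncomputable def kerZxx (n : ℕ) (α lam : Fin (n + 1) → ℝ) (x t : ℝ) : ℝ :=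
  deriv (fun y => kerZx n α lam y t) x

/-!
Write `a = α_m`. Deforming the Hankel contour of `W(-z; -α_j, 0)` to two rays shows that
`|W(-z; -α_j, 0)|` is at most a constant times `min (z, z^{-1/α_j})`, so `h_j` with `ℓ_j = λ_j p`
is dominated by the profile `min (p^{-1/α_j}, p t^{-α_j-1})` of an `α_j`-stable density. The
integral of such a profile over `t > 0` is bounded uniformly in `p`, as for a probability density.
Convolving an `α`-profile with a `β`-profile, `α ≤ β`, therefore gives at most a multiple of a
`β`-profile on bounded time intervals, and inductively `S⁰_m` is dominated by an `a`-profile.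
Bounding the Gaussian factor by `1` and integrating the profile against `p^{-1/2}` yields
`|E(x,t)| ≤ K t^{a/2-1}` uniformly in `x`, and together with `|φ(τ)| ≤ M τ^{a-1}` the claim
reduces to the Euler Beta integral.
-/

section LaplaceTransform

open scoped Complex

theorem differentiableOn_integral_cexp_neg_smul {E : Type*} [NormedAddCommGroup E]
    [NormedSpace ℂ E] {f : ℝ → E}
    (hf : ∀ c : ℝ, 0 < c → IntegrableOn (fun t : ℝ => cexp (-(c * t)) • f t) (Ioi 0)) :
    DifferentiableOn ℂ (fun b : ℂ => ∫ t : ℝ in Ioi 0, cexp (-(b * t)) • f t) {b | 0 < b.re} := by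
  intro b (hb : 0 < b.re)
  have hmeas : ∀ d : ℂ, AEStronglyMeasurable (fun t : ℝ => cexp (-(d * t)) • f t)
      (volume.restrict (Ioi 0)) := fun d => by
    refine ((Continuous.aestronglyMeasurable (f := fun t : ℝ => cexp ((1 - d) * t))
      (by fun_prop)).smul (hf 1 one_pos).aestronglyMeasurable).congr (.of_forall fun t => ?_)
    simp only [Pi.smul_apply', smul_smul, ← Complex.exp_add, Complex.ofReal_one]
    ring_nf
  have hnorm : ∀ (d : ℂ) (t : ℝ), ‖cexp (-(d * t)) • f t‖ = rexp (-(d.re * t)) * ‖f t‖ :=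
    fun d t => by rw [norm_smul, Complex.norm_exp, Complex.neg_re, Complex.re_mul_ofReal]
  set ε := b.re / 4 with hε
  have hε0 : 0 < ε := by positivity
  refine (_root_.hasDerivAt_integral_of_dominated_loc_of_deriv_le (μ := volume.restrict (Ioi 0))
    (F := fun d (t : ℝ) => cexp (-(d * t)) • f t)
    (F' := fun d (t : ℝ) => (-t : ℂ) • cexp (-(d * t)) • f t)
    (bound := fun t : ℝ => ε⁻¹ * ‖cexp (-(ε * t)) • f t‖)
    (Metric.ball_mem_nhds b (ε := 2 * ε) (by positivity)) (.of_forall hmeas) ?_ ?_ ?_ ?_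
    ?_).2.differentiableAt.differentiableWithinAt
  · refine (hf b.re hb).norm.mono' (hmeas b) (.of_forall fun t => ?_)
    rw [hnorm, hnorm, Complex.ofReal_re]
  · exact (Continuous.aestronglyMeasurable (by fun_prop)).smul (hmeas b)
  · filter_upwards [ae_restrict_mem measurableSet_Ioi] with t (ht : 0 < t) d hd
    have hre : 2 * ε ≤ d.re := by
      have := (Complex.abs_re_le_norm (d - b)).trans (mem_ball_iff_norm.1 hd).le
      rw [Complex.sub_re, abs_le] at this
      linarith [this.1]
    have ht_exp : t ≤ ε⁻¹ * rexp (ε * t) := by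
      rw [← div_eq_inv_mul, le_div_iff₀' hε0]
      linarith [add_one_le_exp (ε * t)]
    rw [norm_smul, hnorm, hnorm, norm_neg, Complex.norm_real, norm_of_nonneg ht.le,
      Complex.ofReal_re]
    calc t * (rexp (-(d.re * t)) * ‖f t‖)
        ≤ ε⁻¹ * rexp (ε * t) * (rexp (-(2 * ε * t)) * ‖f t‖) := by gcongr
      _ = ε⁻¹ * (rexp (ε * t + -(2 * ε * t)) * ‖f t‖) := by rw [exp_add]; ring
      _ = ε⁻¹ * (rexp (-(ε * t)) * ‖f t‖) := by ring_nf
  · exact (hf ε hε0).norm.const_mul _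
  · refine .of_forall fun t d _ => ?_
    have hexp : HasDerivAt (fun d : ℂ => cexp (-(d * t))) (cexp (-(d * t)) * -(1 * t)) d :=
      ((hasDerivAt_id d).mul_const (t : ℂ)).neg.cexp
    simpa only [smul_smul, mul_one, mul_comm] using hexp.smul_const (f t)

theorem eqOn_re_pos_of_forall_ofReal_eq {f g : ℂ → ℂ} (hf : DifferentiableOn ℂ f {z | 0 < z.re})
    (hg : DifferentiableOn ℂ g {z | 0 < z.re}) (hfg : ∀ r : ℝ, 0 < r → f r = g r) :
    EqOn f g {z | 0 < z.re} := by
  have hopen : IsOpen {z : ℂ | 0 < z.re} := isOpen_lt continuous_const Complex.continuous_re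
  refine (hf.analyticOnNhd hopen).eqOn_of_preconnected_of_frequently_eq (hg.analyticOnNhd hopen)
    (convex_halfSpace_re_gt 0).isPreconnected (z₀ := 1) (by simp) ?_
  have hreal : Tendsto ((↑) : ℝ → ℂ) (𝓝[>] 1) (𝓝[≠] 1) :=
    Complex.continuous_ofReal.continuousWithinAt.tendsto_nhdsWithin fun r (hr : 1 < r) => by
      simpa using hr.ne'
  refine hreal.frequently (Eventually.frequently ?_)
  filter_upwards [self_mem_nhdsWithin] with r (hr : 1 < r)
  exact hfg r (one_pos.trans hr)

theorem integral_cpow_mul_cexp_neg_mul_Ioi {a b : ℂ} (ha : 0 < a.re) (hb : 0 < b.re) :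
    ∫ t : ℝ in Ioi 0, (t : ℂ) ^ (a - 1) * cexp (-(b * t)) = (1 / b) ^ a * Complex.Gamma a := by
  have hlaplace : DifferentiableOn ℂ
      (fun b : ℂ => ∫ t : ℝ in Ioi 0, cexp (-(b * t)) • (t : ℂ) ^ (a - 1)) {b | 0 < b.re} := by
    refine differentiableOn_integral_cexp_neg_smul fun c hc => ?_
    have hint := integrableOn_rpow_mul_exp_neg_mul_rpow (p := 1) (s := a.re - 1) (by linarith)
      one_pos hc
    refine hint.mono' (by measurability) ?_
    filter_upwards [ae_restrict_mem measurableSet_Ioi] with t (ht : 0 < t)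
    rw [norm_smul, Complex.norm_cpow_eq_rpow_re_of_pos ht, Complex.norm_exp, mul_comm]
    simp
  have hpow : DifferentiableOn ℂ (fun b : ℂ => (1 / b) ^ a * Complex.Gamma a) {b | 0 < b.re} := by
    intro b (hb : 0 < b.re)
    have hb0 : b ≠ 0 := fun h => by simp [h] at hb
    have hslit : 1 / b ∈ Complex.slitPlane := by
      rw [one_div, Complex.mem_slitPlane_iff, Complex.inv_re]
      exact Or.inl (div_pos hb (Complex.normSq_pos.2 hb0))
    exact ((((differentiableAt_const 1).div differentiableAt_id hb0).cpow_const
      hslit).mul_const _).differentiableWithinAt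
  have heq := eqOn_re_pos_of_forall_ofReal_eq hlaplace hpow fun r hr => by
    simp only [smul_eq_mul, mul_comm (cexp _)]
    exact Complex.integral_cpow_mul_exp_neg_mul_Ioi ha hr
  simpa only [smul_eq_mul, mul_comm (cexp _)] using heq hb

end LaplaceTransform

section WrightFunction

open scoped Complex

theorem integrableOn_exp_neg_mul_add_mul_rpow {a c : ℝ} (ha : 0 ≤ a) (ha1 : a < 1) (hc : 0 < c)
    (y : ℝ) : IntegrableOn (fun r : ℝ => rexp (-(c * r) + y * r ^ a)) (Ioi 0) := by
  refine integrable_of_isBigO_exp_neg (b := c / 2) (by positivity) ?_ (.of_bound 1 ?_)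
  · exact ContinuousOn.rexp (.add (by fun_prop) (continuousOn_const.mul
      (continuousOn_id.rpow_const fun _ _ => Or.inr ha)))
  have hsmall := (tendsto_rpow_neg_atTop (sub_pos.2 ha1)).eventually_le_const
    (show 0 < c / (2 * (|y| + 1)) by positivity)
  filter_upwards [hsmall, eventually_gt_atTop 0] with r hr hr0
  rw [neg_sub, rpow_sub_one hr0.ne', div_le_iff₀ hr0] at hr
  rw [norm_of_nonneg (exp_pos _).le, norm_of_nonneg (exp_pos _).le, one_mul, exp_le_exp]
  have habsorb : y * r ^ a ≤ c / 2 * r :=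
    calc y * r ^ a ≤ (|y| + 1) * (c / (2 * (|y| + 1)) * r) :=
          mul_le_mul (by linarith [le_abs_self y]) hr (by positivity) (by positivity)
      _ = c / 2 * r := by field_simp
  linarith

theorem hasSum_integral_mul_cexp {X : Type*} [MeasurableSpace X] {μ : Measure X} {g h : X → ℂ}
    (hg : AEStronglyMeasurable g μ) (hh : AEStronglyMeasurable h μ)
    (hint : Integrable (fun x => ‖g x‖ * rexp ‖h x‖) μ) :
    HasSum (fun k : ℕ => ∫ x, g x * (h x ^ k / k.factorial) ∂μ) (∫ x, g x * cexp (h x) ∂μ) := by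
  have hexp : ∀ z : ℂ, HasSum (fun k : ℕ => z ^ k / k.factorial) (cexp z) := fun z => by
    rw [Complex.exp_eq_exp_ℂ]
    exact NormedSpace.expSeries_div_hasSum_exp z
  have hrexp : ∀ x, HasSum (fun k : ℕ => ‖g x‖ * (‖h x‖ ^ k / k.factorial))
      (‖g x‖ * rexp ‖h x‖) := fun x => by
    rw [Real.exp_eq_exp_ℝ]
    exact (NormedSpace.expSeries_div_hasSum_exp ‖h x‖).mul_left _
  refine MeasureTheory.hasSum_integral_of_dominated_convergence
    (fun k x => ‖g x‖ * (‖h x‖ ^ k / k.factorial))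
    (fun k => by fun_prop)
    (fun k => .of_forall fun x => ?_) (.of_forall fun x => (hrexp x).summable) ?_
    (.of_forall fun x => (hexp (h x)).mul_left (g x))
  · rw [norm_mul, norm_div, norm_pow, Complex.norm_natCast]
  · simpa only [fun x => (hrexp x).tsum_eq] using hint

/-- The unit vector `w = exp(iπa/(1+a))`. In the Hankel integral
`W(y; -a, 0) = (2πi)⁻¹ ∫ exp(ζ + y ζᵃ) dζ` the contour is deformed to the rays `ζ = -w^{∓1} r`,
on which `ζᵃ = w^{±1} rᵃ`; the angle is chosen so that `ζ` and `-ζᵃ` make equal angles with the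
negative axis. -/
noncomputable def wrightDir (a : ℝ) : ℂ := cexp (↑(π * a / (1 + a)) * Complex.I)

/-- The integrand `w⁻¹ exp(-w⁻¹ r + y w rᵃ)`, with `w = wrightDir a`, of the Hankel integral for
`W(y; -a, 0)` along one of the two conjugate rays. -/
noncomputable def wrightKernel (a y r : ℝ) : ℂ :=
  (wrightDir a)⁻¹ * cexp (-((wrightDir a)⁻¹ * r) + y * wrightDir a * (r ^ a : ℝ))

theorem norm_wrightDir (a : ℝ) : ‖wrightDir a‖ = 1 := Complex.norm_exp_ofReal_mul_I _

theorem re_inv_wrightDir (a : ℝ) : (wrightDir a)⁻¹.re = (wrightDir a).re := by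
  rw [Complex.inv_re, Complex.normSq_eq_norm_sq, norm_wrightDir, one_pow, div_one]

theorem re_wrightDir_pos {a : ℝ} (ha : 0 < a) (ha1 : a < 1) : 0 < (wrightDir a).re := by
  rw [wrightDir, Complex.exp_ofReal_mul_I_re]
  refine cos_pos_of_mem_Ioo ⟨(by linarith [pi_pos] : -(π / 2) < 0).trans (by positivity), ?_⟩
  rw [div_lt_div_iff₀ (by linarith) two_pos]
  nlinarith [pi_pos]

theorem wrightDir_cpow {a : ℝ} (ha : 0 < a) (z : ℂ) :
    wrightDir a ^ z = cexp (z * (↑(π * a / (1 + a)) * Complex.I)) := by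
  have hpos : 0 < π * a / (1 + a) := by positivity
  have hlt : π * a / (1 + a) < π := by
    rw [div_lt_iff₀ (by linarith)]
    nlinarith [pi_pos]
  rw [wrightDir, Complex.cpow_def_of_ne_zero (Complex.exp_ne_zero _), Complex.log_exp, mul_comm]
  · rw [Complex.im_ofReal_mul, Complex.I_im, mul_one]
    exact (neg_lt_zero.2 pi_pos).trans hpos
  · rw [Complex.im_ofReal_mul, Complex.I_im, mul_one]
    exact hlt.le

theorem norm_wrightKernel (a y r : ℝ) :
    ‖wrightKernel a y r‖ = rexp (-((wrightDir a).re * r) + y * (wrightDir a).re * r ^ a) := by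
  rw [wrightKernel, norm_mul, norm_inv, norm_wrightDir, inv_one, one_mul, Complex.norm_exp,
    Complex.add_re, Complex.neg_re, Complex.re_mul_ofReal, Complex.re_mul_ofReal,
    Complex.re_ofReal_mul, re_inv_wrightDir]

theorem measurable_uncurry_wrightKernel (a : ℝ) :
    Measurable (Function.uncurry (wrightKernel a)) := by
  simp only [Function.uncurry_def, wrightKernel]
  fun_prop

theorem integrableOn_wrightKernel {a : ℝ} (ha : 0 < a) (ha1 : a < 1) (y : ℝ) :
    IntegrableOn (wrightKernel a y) (Ioi 0) :=
  (integrableOn_exp_neg_mul_add_mul_rpow ha.le ha1 (re_wrightDir_pos ha ha1)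
    (y * (wrightDir a).re)).mono'
    ((measurable_uncurry_wrightKernel a).of_uncurry_left (x := y)).aestronglyMeasurable
    (.of_forall fun r => (norm_wrightKernel a y r).le)

theorem integral_wrightDir_moment {a : ℝ} (ha : 0 < a) (ha1 : a < 1) (y : ℝ) (k : ℕ) :
    ∫ r : ℝ in Ioi 0, (wrightDir a)⁻¹ * cexp (-((wrightDir a)⁻¹ * r)) *
        ((y * wrightDir a * (r ^ a : ℝ)) ^ k / k.factorial) =
      ↑(y ^ k / k.factorial * Gamma (a * k + 1)) * cexp (↑(π * (a * k)) * Complex.I) := by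
  set w := wrightDir a with hw
  have hgamma := integral_cpow_mul_cexp_neg_mul_Ioi (a := (a * k + 1 : ℝ)) (b := w⁻¹)
    (by rw [Complex.ofReal_re]; positivity) (by
      rw [re_inv_wrightDir]; exact re_wrightDir_pos ha ha1)
  rw [one_div, inv_inv, Complex.Gamma_ofReal] at hgamma
  have hangle : w⁻¹ * w ^ k * w ^ ((a * k + 1 : ℝ) : ℂ) =
      cexp (↑(π * (a * k)) * Complex.I) := by
    rw [wrightDir_cpow ha, hw, wrightDir, ← Complex.exp_neg, ← Complex.exp_nat_mul,
      ← Complex.exp_add, ← Complex.exp_add]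
    have hsum : π * (a * k) =
        -(π * a / (1 + a)) + k * (π * a / (1 + a)) + (a * k + 1) * (π * a / (1 + a)) := by
      field_simp
      ring
    rw [hsum]
    push_cast
    ring_nf
  calc _ = ∫ r : ℝ in Ioi 0, w⁻¹ * (y * w) ^ k / k.factorial *
        ((r : ℂ) ^ (((a * k + 1 : ℝ) : ℂ) - 1) * cexp (-(w⁻¹ * r))) := by
        refine setIntegral_congr_fun measurableSet_Ioi fun r (hr : 0 < r) => ?_
        have hpow : (r : ℂ) ^ (((a * k + 1 : ℝ) : ℂ) - 1) = ((r ^ a : ℝ) : ℂ) ^ k := by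
          rw [← Complex.ofReal_one, ← Complex.ofReal_sub, ← Complex.ofReal_cpow hr.le,
            add_sub_cancel_right, rpow_mul_natCast hr.le, Complex.ofReal_pow]
        simp only [hpow]
        ring
    _ = _ := by
        rw [MeasureTheory.integral_const_mul, hgamma, ← hangle]
        push_cast
        ring

theorem hasSum_integral_wrightKernel {a : ℝ} (ha : 0 < a) (ha1 : a < 1) (y : ℝ) :
    HasSum (fun k : ℕ => ↑(y ^ k / k.factorial * Gamma (a * k + 1)) *
      cexp (↑(π * (a * k)) * Complex.I)) (∫ r in Ioi 0, wrightKernel a y r) := by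
  set w := wrightDir a
  have hsum := hasSum_integral_mul_cexp (μ := volume.restrict (Ioi 0))
    (g := fun r : ℝ => w⁻¹ * cexp (-(w⁻¹ * r))) (h := fun r : ℝ => y * w * (r ^ a : ℝ))
    (by fun_prop) (Measurable.aestronglyMeasurable (by fun_prop)) ?_
  · simp only [w, integral_wrightDir_moment ha ha1] at hsum
    simpa only [wrightKernel, Complex.exp_add, mul_assoc] using hsum
  refine (integrableOn_congr_fun (fun r (hr : 0 < r) => ?_) measurableSet_Ioi).1
    (integrableOn_exp_neg_mul_add_mul_rpow ha.le ha1 (re_wrightDir_pos ha ha1) |y|)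
  rw [norm_mul, norm_mul, norm_mul, norm_inv, norm_wrightDir, Complex.norm_exp, Complex.neg_re,
    Complex.re_mul_ofReal, re_inv_wrightDir, Complex.norm_real, Complex.norm_real,
    norm_of_nonneg (rpow_nonneg hr.le a), Real.norm_eq_abs, inv_one, one_mul, mul_one, exp_add]

theorem inv_Gamma_neg {x : ℝ} (hx : -1 < x) :
    (Gamma (-x))⁻¹ = -(Gamma (x + 1) * sin (π * x)) / π := by
  have hreflect := Gamma_mul_Gamma_one_sub (-x)
  rw [sub_neg_eq_add, add_comm, mul_neg, sin_neg] at hreflect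
  have hpos : Gamma (x + 1) ≠ 0 := (Gamma_pos_of_pos (by linarith)).ne'
  rw [← eq_div_iff hpos] at hreflect
  rw [hreflect, inv_div, div_neg, div_neg, ← neg_div, div_div_eq_mul_div, neg_mul]

theorem wrightW_zero_eq {a : ℝ} (ha : 0 < a) (ha1 : a < 1) (y : ℝ) :
    wrightW a 0 y = -(∫ r in Ioi 0, wrightKernel a y r).im / π := by
  have him := (Complex.hasSum_im (hasSum_integral_wrightKernel ha ha1 y)).neg.div_const π
  rw [← him.tsum_eq, wrightW]
  refine tsum_congr fun k => ?_
  rw [Complex.im_ofReal_mul, Complex.exp_ofReal_mul_I_im, zero_sub, div_mul_eq_div_div,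
    div_eq_mul_inv _ (Gamma _), inv_Gamma_neg (neg_one_lt_zero.trans_le (by positivity))]
  ring

theorem measurable_wrightW_zero {a : ℝ} (ha : 0 < a) (ha1 : a < 1) : Measurable (wrightW a 0) := by
  have hint : StronglyMeasurable fun y => ∫ r in Ioi 0, wrightKernel a y r :=
    (measurable_uncurry_wrightKernel a).stronglyMeasurable.integral_prod_right
  rw [funext (wrightW_zero_eq ha ha1)]
  exact (Complex.measurable_im.comp hint.measurable).neg.div_const π

theorem norm_cexp_sub_one_le_of_re_nonpos {z : ℂ} (hz : z.re ≤ 0) :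
    ‖cexp z - 1‖ ≤ 2 * ‖z‖ := by
  rcases le_total ‖z‖ 1 with h | h
  · exact Complex.norm_exp_sub_one_le h
  · refine (norm_sub_le _ _).trans ?_
    rw [Complex.norm_exp, norm_one]
    linarith [exp_le_one_iff.2 hz]

theorem wrightW_zero_zero (a : ℝ) : wrightW a 0 0 = 0 :=
  (tsum_congr fun k => by rcases eq_or_ne k 0 with rfl | hk <;> simp [*]).trans tsum_zero

theorem norm_wrightKernel_neg_sub_le {a r z : ℝ} (ha : 0 < a) (ha1 : a < 1) (hr : 0 ≤ r)
    (hz : 0 ≤ z) : ‖wrightKernel a (-z) r - wrightKernel a 0 r‖ ≤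
      2 * z * (r ^ (a + 1 - 1) * rexp (-((wrightDir a).re * r))) := by
  set w := wrightDir a
  have hfactor : wrightKernel a (-z) r - wrightKernel a 0 r =
      wrightKernel a 0 r * (cexp (↑(-z) * w * (r ^ a : ℝ)) - 1) := by
    simp only [wrightKernel, Complex.exp_add, Complex.ofReal_zero, zero_mul, Complex.exp_zero]
    ring
  have hre : (↑(-z) * w * (r ^ a : ℝ)).re ≤ 0 := by
    rw [Complex.re_mul_ofReal, Complex.re_ofReal_mul, neg_mul, neg_mul, neg_nonpos]
    have := re_wrightDir_pos ha ha1
    positivity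
  have hexp := norm_cexp_sub_one_le_of_re_nonpos hre
  rw [norm_mul, norm_mul, norm_wrightDir, Complex.norm_real, Complex.norm_real, norm_neg,
    norm_of_nonneg hz, norm_of_nonneg (rpow_nonneg hr a), mul_one] at hexp
  rw [hfactor, norm_mul, norm_wrightKernel, zero_mul, zero_mul, add_zero, add_sub_cancel_right]
  calc rexp (-(w.re * r)) * _ ≤ rexp (-(w.re * r)) * (2 * (z * r ^ a)) := by gcongr
    _ = _ := by ring

theorem abs_wrightW_zero_neg_le_mul {a z : ℝ} (ha : 0 < a) (ha1 : a < 1) (hz : 0 ≤ z) :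
    |wrightW a 0 (-z)| ≤
      2 / π * ((1 / (wrightDir a).re) ^ (a + 1) * Gamma (a + 1)) * z := by
  have hc := re_wrightDir_pos ha ha1
  have hdiff : wrightW a 0 (-z) =
      -(∫ r in Ioi 0, (wrightKernel a (-z) r - wrightKernel a 0 r)).im / π := by
    have hzero := wrightW_zero_zero a
    rw [wrightW_zero_eq ha ha1] at hzero
    rw [MeasureTheory.integral_sub (integrableOn_wrightKernel ha ha1 _)
      (integrableOn_wrightKernel ha ha1 _), Complex.sub_im, wrightW_zero_eq ha ha1]
    linear_combination hzero
  have hnorm : ‖∫ r in Ioi 0, (wrightKernel a (-z) r - wrightKernel a 0 r)‖ ≤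
      2 * z * ((1 / (wrightDir a).re) ^ (a + 1) * Gamma (a + 1)) := by
    rw [← Real.integral_rpow_mul_exp_neg_mul_Ioi (by linarith) hc,
      ← MeasureTheory.integral_const_mul]
    have hint : IntegrableOn (fun r : ℝ => r ^ (a + 1 - 1) * rexp (-((wrightDir a).re * r)))
        (Ioi 0) := by
      simpa using integrableOn_rpow_mul_exp_neg_mul_rpow (p := 1) (s := a) (by linarith)
        one_pos hc
    refine norm_integral_le_of_norm_le (hint.const_mul _) ?_
    filter_upwards [ae_restrict_mem measurableSet_Ioi] with r (hr : 0 < r)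
    exact norm_wrightKernel_neg_sub_le ha ha1 hr.le hz
  rw [hdiff, abs_div, abs_neg, abs_of_pos pi_pos, div_le_iff₀ pi_pos]
  refine ((Complex.abs_im_le_norm _).trans hnorm).trans_eq ?_
  field_simp

theorem abs_wrightW_zero_neg_le_rpow {a z : ℝ} (ha : 0 < a) (ha1 : a < 1) (hz : 0 < z) :
    |wrightW a 0 (-z)| ≤
      (wrightDir a).re ^ (-1 / a) * Gamma (1 / a + 1) / π * z ^ (-1 / a) := by
  have hc := re_wrightDir_pos ha ha1
  set c := (wrightDir a).re
  have hnorm : ‖∫ r in Ioi 0, wrightKernel a (-z) r‖ ≤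
      z ^ (-1 / a) * c ^ (-1 / a) * Gamma (1 / a + 1) := by
    rw [← mul_rpow hz.le hc.le, ← integral_exp_neg_mul_rpow ha (mul_pos hz hc)]
    have hint : IntegrableOn (fun r : ℝ => rexp (-(z * c) * r ^ a)) (Ioi 0) := by
      simpa using integrableOn_rpow_mul_exp_neg_mul_rpow (p := a) (s := 0) (by norm_num) ha
        (mul_pos hz hc)
    refine norm_integral_le_of_norm_le hint ?_
    filter_upwards [ae_restrict_mem measurableSet_Ioi] with r (hr : 0 < r)
    rw [norm_wrightKernel, exp_le_exp]
    linarith [mul_pos hc hr]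
  rw [wrightW_zero_eq ha ha1, abs_div, abs_neg, abs_of_pos pi_pos, div_le_iff₀ pi_pos]
  refine ((Complex.abs_im_le_norm _).trans hnorm).trans_eq ?_
  field_simp

end WrightFunction

section StableProfile

theorem integrableOn_min_rpow {β γ P Q : ℝ} (hβ : -1 < β) (hγ : γ < -1) (hP : 0 ≤ P)
    (hQ : 0 ≤ Q) : IntegrableOn (fun t : ℝ => min (P * t ^ β) (Q * t ^ γ)) (Ioi 0) := by
  have hmeas : Measurable fun t : ℝ => min (P * t ^ β) (Q * t ^ γ) := by fun_prop
  have hnonneg : ∀ t > 0, 0 ≤ min (P * t ^ β) (Q * t ^ γ) := fun t ht =>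
    le_min (by positivity) (by positivity)
  rw [← Ioc_union_Ioi_eq_Ioi zero_le_one]
  refine IntegrableOn.union ?_ ?_
  · refine (((intervalIntegrable_iff_integrableOn_Ioc_of_le zero_le_one).1
      (intervalIntegrable_rpow' hβ)).const_mul P).mono' hmeas.aestronglyMeasurable ?_
    filter_upwards [ae_restrict_mem measurableSet_Ioc] with t ht
    rw [norm_of_nonneg (hnonneg t ht.1)]
    exact min_le_left _ _
  · refine ((integrableOn_Ioi_rpow_of_lt hγ one_pos).const_mul Q).mono'
      hmeas.aestronglyMeasurable ?_
    filter_upwards [ae_restrict_mem measurableSet_Ioi] with t (ht : 1 < t)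
    rw [norm_of_nonneg (hnonneg t (one_pos.trans ht))]
    exact min_le_right _ _

theorem integral_min_rpow_le {β γ P Q c : ℝ} (hβ : -1 < β) (hγ : γ < -1) (hP : 0 ≤ P)
    (hQ : 0 ≤ Q) (hc : 0 < c) :
    ∫ t in Ioi 0, min (P * t ^ β) (Q * t ^ γ) ≤
      P * (c ^ (β + 1) / (β + 1)) + Q * (-c ^ (γ + 1) / (γ + 1)) := by
  have hint := integrableOn_min_rpow hβ hγ hP hQ
  have hint₁ := hint.mono_set (Ioc_subset_Ioi_self : Ioc 0 c ⊆ Ioi 0)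
  have hint₂ := hint.mono_set (Ioi_subset_Ioi hc.le)
  rw [← Ioc_union_Ioi_eq_Ioi hc.le, setIntegral_union (Ioc_disjoint_Ioi le_rfl) measurableSet_Ioi
    hint₁ hint₂]
  refine add_le_add ?_ ?_
  · calc ∫ t in Ioc 0 c, min (P * t ^ β) (Q * t ^ γ) ≤ ∫ t in Ioc 0 c, P * t ^ β :=
          setIntegral_mono hint₁ (((intervalIntegrable_iff_integrableOn_Ioc_of_le hc.le).1
            (intervalIntegrable_rpow' hβ)).const_mul P) fun t => min_le_left _ _
      _ = P * (c ^ (β + 1) / (β + 1)) := by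
          rw [MeasureTheory.integral_const_mul, ← intervalIntegral.integral_of_le hc.le,
            integral_rpow (Or.inl hβ), zero_rpow (by linarith), sub_zero]
  · calc ∫ t in Ioi c, min (P * t ^ β) (Q * t ^ γ) ≤ ∫ t in Ioi c, Q * t ^ γ :=
          setIntegral_mono hint₂ ((integrableOn_Ioi_rpow_of_lt hγ hc).const_mul Q)
            fun t => min_le_right _ _
      _ = Q * (-c ^ (γ + 1) / (γ + 1)) := by
          rw [MeasureTheory.integral_const_mul, integral_Ioi_rpow_of_lt hγ hc]

/-- The size of the density at time `t` of the one-sided `a`-stable subordinator run for time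
`p`: bounded by its maximum `p^{-1/a}` and by its tail `p t^{-a-1}`. -/
noncomputable def stableProfile (a p t : ℝ) : ℝ := min (p ^ (-1 / a)) (p * t ^ (-a - 1))

theorem stableProfile_nonneg {a p t : ℝ} (hp : 0 ≤ p) (ht : 0 ≤ t) : 0 ≤ stableProfile a p t :=
  le_min (by positivity) (by positivity)

theorem intervalIntegrable_stableProfile {a p t : ℝ} (ha : 0 < a) (hp : 0 ≤ p) (ht : 0 ≤ t) :
    IntervalIntegrable (stableProfile a p) volume 0 t := by
  have h := integrableOn_min_rpow neg_one_lt_zero (by linarith : -a - 1 < -1)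
    (rpow_nonneg hp (-1 / a)) hp
  simp only [rpow_zero, mul_one] at h
  exact (intervalIntegrable_iff_integrableOn_Ioc_of_le ht).2 (h.mono_set Ioc_subset_Ioi_self)

theorem intervalIntegral_stableProfile_le {a p t : ℝ} (ha : 0 < a) (hp : 0 < p) (ht : 0 ≤ t) :
    ∫ τ in 0..t, stableProfile a p τ ≤ 1 + 1 / a := by
  have hγ : -a - 1 < -1 := by linarith
  have hP : 0 ≤ p ^ (-1 / a) := by positivity
  have hint := integrableOn_min_rpow neg_one_lt_zero hγ hP hp.le
  have hle := integral_min_rpow_le (c := p ^ (1 / a)) neg_one_lt_zero hγ hP hp.le (by positivity)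
  simp only [rpow_zero, mul_one] at hint hle
  have hhead : p ^ (-1 / a) * p ^ (1 / a) = 1 := by
    rw [← rpow_add hp, neg_div, neg_add_cancel, rpow_zero]
  have htail : (p ^ (1 / a)) ^ (-a) = p⁻¹ := by
    rw [← rpow_mul hp.le, one_div, mul_neg, inv_mul_cancel₀ ha.ne', rpow_neg_one]
  rw [intervalIntegral.integral_of_le ht]
  calc ∫ τ in Ioc 0 t, stableProfile a p τ ≤ ∫ τ in Ioi 0, stableProfile a p τ := by
        refine setIntegral_mono_set hint ?_ Ioc_subset_Ioi_self.eventuallyLE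
        filter_upwards [ae_restrict_mem measurableSet_Ioi] with τ (hτ : 0 < τ)
        exact stableProfile_nonneg hp.le hτ.le
    _ ≤ _ := hle
    _ = 1 + 1 / a := by
        rw [zero_add, rpow_one, div_one, hhead, sub_add_cancel, htail]
        field_simp

theorem stableProfile_le_of_half_le {a p t τ : ℝ} (ha : 0 ≤ a) (hp : 0 ≤ p) (ht : 0 < t)
    (hτ : t / 2 ≤ τ) : stableProfile a p τ ≤ 2 ^ (a + 1) * (p * t ^ (-a - 1)) :=
  calc stableProfile a p τ ≤ p * τ ^ (-a - 1) := min_le_right _ _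
    _ ≤ p * (t / 2) ^ (-a - 1) := mul_le_mul_of_nonneg_left
        (rpow_le_rpow_of_nonpos (by positivity) hτ (by linarith)) hp
    _ = 2 ^ (a + 1) * (p * t ^ (-a - 1)) := by
        rw [div_rpow ht.le two_pos.le, div_eq_mul_inv, ← rpow_neg two_pos.le, neg_sub,
          sub_neg_eq_add, add_comm 1 a]
        ring

theorem rpow_mul_stableProfile_eq {a p q t : ℝ} (hp : 0 < p) :
    p ^ q * stableProfile a p t =
      min (t ^ (-a - 1) * p ^ (q + 1)) (1 * p ^ (q - 1 / a)) := by
  rw [stableProfile, mul_min_of_nonneg _ _ (by positivity), min_comm, rpow_add_one hp.ne',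
    ← rpow_add hp, one_mul, neg_div, ← sub_eq_add_neg]
  ring_nf

theorem integrableOn_rpow_mul_stableProfile {a q t : ℝ} (hq : -2 < q) (hqa : q + 1 < 1 / a)
    (ht : 0 < t) : IntegrableOn (fun p => p ^ q * stableProfile a p t) (Ioi 0) :=
  (integrableOn_congr_fun (fun _ hp => rpow_mul_stableProfile_eq hp) measurableSet_Ioi).2
    (integrableOn_min_rpow (by linarith) (by linarith) (by positivity) zero_le_one)

theorem integral_rpow_mul_stableProfile_le {a q t : ℝ} (ha : 0 < a) (hq : -2 < q)
    (hqa : q + 1 < 1 / a) (ht : 0 < t) :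
    ∫ p in Ioi 0, p ^ q * stableProfile a p t ≤
      (1 / (q + 2) + 1 / (1 / a - (q + 1))) * t ^ (a * (q + 1) - 1) := by
  have hhead : t ^ (-a - 1) * (t ^ a) ^ (q + 1 + 1) = t ^ (a * (q + 1) - 1) := by
    rw [← rpow_mul ht.le, ← rpow_add ht]
    ring_nf
  have htail : (t ^ a) ^ (q - 1 / a + 1) = t ^ (a * (q + 1) - 1) := by
    rw [← rpow_mul ht.le, sub_add_eq_add_sub, mul_sub, mul_one_div_cancel ha.ne']
  calc ∫ p in Ioi 0, p ^ q * stableProfile a p t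
      = ∫ p in Ioi 0, min (t ^ (-a - 1) * p ^ (q + 1)) (1 * p ^ (q - 1 / a)) :=
        setIntegral_congr_fun measurableSet_Ioi fun p hp => rpow_mul_stableProfile_eq hp
    _ ≤ t ^ (-a - 1) * ((t ^ a) ^ (q + 1 + 1) / (q + 1 + 1)) +
        1 * (-(t ^ a) ^ (q - 1 / a + 1) / (q - 1 / a + 1)) :=
        integral_min_rpow_le (by linarith) (by linarith) (by positivity) zero_le_one
          (by positivity)
    _ = _ := by
        rw [htail, ← mul_div_assoc, hhead, ← neg_sub (q + 1), neg_div, ← div_neg]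
        ring_nf

end StableProfile

section Convolution

theorem abs_laplaceConv_le_of_mul_le {f g F G : ℝ → ℝ} {M N t : ℝ} (ht : 0 ≤ t)
    (hF : IntervalIntegrable F volume 0 t) (hG : IntervalIntegrable G volume 0 t)
    (hfg : ∀ τ ∈ Ioo 0 t, |f τ| * |g (t - τ)| ≤ M * F τ + N * G (t - τ)) :
    |laplaceConv f g t| ≤ M * (∫ τ in 0..t, F τ) + N * ∫ τ in 0..t, G τ := by
  have hG' : IntervalIntegrable (fun τ => G (t - τ)) volume 0 t := by
    simpa using (hG.comp_sub_left t).symm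
  have hbound : ∀ᵐ τ, τ ∈ Ioc 0 t → ‖f τ * g (t - τ)‖ ≤ M * F τ + N * G (t - τ) := by
    filter_upwards [Measure.ae_ne volume t] with τ hτt hτ
    rw [norm_mul]
    exact hfg τ ⟨hτ.1, hτ.2.lt_of_ne hτt⟩
  refine (intervalIntegral.norm_integral_le_of_norm_le ht hbound
    ((hF.const_mul M).add (hG'.const_mul N))).trans_eq ?_
  rw [intervalIntegral.integral_add (hF.const_mul M) (hG'.const_mul N),
    intervalIntegral.integral_const_mul, intervalIntegral.integral_const_mul,
    intervalIntegral.integral_comp_sub_left G, sub_self, sub_zero]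

section FixedScale

variable {a b A B p t : ℝ} {f g : ℝ → ℝ}

theorem abs_laplaceConv_le_const (ha : 0 < a) (hb : 0 < b) (hA : 0 ≤ A) (hB : 0 ≤ B) (hp : 0 < p)
    (ht : 0 ≤ t) (hf : ∀ τ ∈ Ioo 0 t, |f τ| ≤ A * stableProfile a p τ)
    (hg : ∀ τ ∈ Ioo 0 t, |g τ| ≤ B * stableProfile b p τ) :
    |laplaceConv f g t| ≤ A * B * (1 + 1 / a) * p ^ (-1 / b) := by
  refine (abs_laplaceConv_le_of_mul_le (M := A * B * p ^ (-1 / b)) (N := 0) ht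
    (intervalIntegrable_stableProfile ha hp.le ht)
    (intervalIntegrable_stableProfile hb hp.le ht) fun τ hτ => ?_).trans ?_
  · have hsup : |g (t - τ)| ≤ B * p ^ (-1 / b) :=
      (hg (t - τ) ⟨sub_pos.2 hτ.2, sub_lt_self t hτ.1⟩).trans (by gcongr; exact min_le_left _ _)
    calc |f τ| * |g (t - τ)| ≤ A * stableProfile a p τ * (B * p ^ (-1 / b)) :=
          mul_le_mul (hf τ hτ) hsup (abs_nonneg _) ((abs_nonneg _).trans (hf τ hτ))
      _ = _ := by ring
  · rw [zero_mul, add_zero]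
    calc A * B * p ^ (-1 / b) * _ ≤ A * B * p ^ (-1 / b) * (1 + 1 / a) := by
          gcongr
          exact intervalIntegral_stableProfile_le ha hp ht
      _ = _ := by ring

theorem abs_laplaceConv_le_tail (ha : 0 < a) (hb : 0 < b) (hA : 0 ≤ A) (hB : 0 ≤ B) (hp : 0 < p)
    (ht : 0 < t) (hf : ∀ τ ∈ Ioo 0 t, |f τ| ≤ A * stableProfile a p τ)
    (hg : ∀ τ ∈ Ioo 0 t, |g τ| ≤ B * stableProfile b p τ) :
    |laplaceConv f g t| ≤ A * B * p * (2 ^ (b + 1) * (1 + 1 / a) * t ^ (-b - 1) +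
      2 ^ (a + 1) * (1 + 1 / b) * t ^ (-a - 1)) := by
  refine (abs_laplaceConv_le_of_mul_le (M := A * B * (2 ^ (b + 1) * (p * t ^ (-b - 1))))
    (N := A * B * (2 ^ (a + 1) * (p * t ^ (-a - 1)))) ht.le
    (intervalIntegrable_stableProfile ha hp.le ht.le)
    (intervalIntegrable_stableProfile hb hp.le ht.le) fun τ hτ => ?_).trans ?_
  · have hτ' : t - τ ∈ Ioo 0 t := ⟨sub_pos.2 hτ.2, sub_lt_self t hτ.1⟩
    have hSa := stableProfile_nonneg (a := a) hp.le hτ.1.le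
    have hSb := stableProfile_nonneg (a := b) hp.le hτ'.1.le
    have hmul : |f τ| * |g (t - τ)| ≤ A * B * stableProfile b p (t - τ) * stableProfile a p τ :=
      (mul_le_mul (hf τ hτ) (hg _ hτ') (abs_nonneg _) (by positivity)).trans_eq (by ring)
    -- The tail bound is used for whichever of `τ`, `t - τ` is at least `t / 2`.
    rcases le_total τ (t / 2) with hle | hle
    · refine hmul.trans (le_add_of_le_of_nonneg ?_ (by positivity))
      gcongr
      exact stableProfile_le_of_half_le hb.le hp.le ht (by linarith)
    · rw [mul_right_comm] at hmul
      refine hmul.trans (le_add_of_nonneg_of_le (by positivity) ?_)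
      gcongr
      exact stableProfile_le_of_half_le ha.le hp.le ht hle
  · calc _ ≤ A * B * (2 ^ (b + 1) * (p * t ^ (-b - 1))) * (1 + 1 / a) +
          A * B * (2 ^ (a + 1) * (p * t ^ (-a - 1))) * (1 + 1 / b) := by
          gcongr
          · exact intervalIntegral_stableProfile_le ha hp ht.le
          · exact intervalIntegral_stableProfile_le hb hp ht.le
      _ = _ := by ring

end FixedScale

/-- The family `h p` is dominated by the `a`-stable profiles at scale `p`, up to a constant that
is uniform in `p > 0` and in `t ∈ (0, T]`. -/
def IsStableBounded (a T : ℝ) (h : ℝ → ℝ → ℝ) : Prop :=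
  ∃ A > 0, ∀ p > 0, ∀ t ∈ Ioc 0 T, |h p t| ≤ A * stableProfile a p t

theorem IsStableBounded.laplaceConv {a b T : ℝ} {f g : ℝ → ℝ → ℝ} (hf : IsStableBounded a T f)
    (hg : IsStableBounded b T g) (ha : 0 < a) (hab : a ≤ b) (hT : 0 < T) :
    IsStableBounded b T fun p => laplaceConv (f p) (g p) := by
  obtain ⟨A, hA, hf⟩ := hf
  obtain ⟨B, hB, hg⟩ := hg
  have hb : 0 < b := ha.trans_le hab
  refine ⟨A * B * ((1 + 1 / a) + (2 ^ (b + 1) * (1 + 1 / a) +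
    2 ^ (a + 1) * (1 + 1 / b) * T ^ (b - a))), by positivity, fun p hp t ht => ?_⟩
  have ht0 : 0 < t := ht.1
  have hsub : ∀ τ ∈ Ioo 0 t, τ ∈ Ioc 0 T := fun τ hτ => ⟨hτ.1, hτ.2.le.trans ht.2⟩
  have hconst := abs_laplaceConv_le_const ha hb hA.le hB.le hp ht0.le
    (fun τ hτ => hf p hp τ (hsub τ hτ)) fun τ hτ => hg p hp τ (hsub τ hτ)
  have htail := abs_laplaceConv_le_tail ha hb hA.le hB.le hp ht0
    (fun τ hτ => hf p hp τ (hsub τ hτ)) fun τ hτ => hg p hp τ (hsub τ hτ)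
  have hpow : t ^ (-a - 1) ≤ T ^ (b - a) * t ^ (-b - 1) := by
    rw [show -a - 1 = (b - a) + (-b - 1) by ring, rpow_add ht0]
    gcongr
    exact ht.2
  rw [stableProfile, mul_min_of_nonneg _ _ (by positivity)]
  refine le_min (hconst.trans ?_) (htail.trans ?_)
  · refine mul_le_mul_of_nonneg_right ?_ (by positivity)
    exact mul_le_mul_of_nonneg_left (le_add_of_nonneg_right (by positivity)) (by positivity)
  · calc _ ≤ A * B * p * (2 ^ (b + 1) * (1 + 1 / a) * t ^ (-b - 1) +
          2 ^ (a + 1) * (1 + 1 / b) * (T ^ (b - a) * t ^ (-b - 1))) := by gcongr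
      _ = A * B * (0 + (2 ^ (b + 1) * (1 + 1 / a) + 2 ^ (a + 1) * (1 + 1 / b) * T ^ (b - a))) *
          (p * t ^ (-b - 1)) := by ring
      _ ≤ _ := by gcongr; positivity

theorem IsStableBounded.iterConv {T : ℝ} (hT : 0 < T) {n : ℕ} {α : Fin (n + 1) → ℝ}
    {h : Fin (n + 1) → ℝ → ℝ → ℝ} (hα : Monotone α) (hpos : 0 < α 0)
    (hh : ∀ j, IsStableBounded (α j) T (h j)) :
    IsStableBounded (α (Fin.last n)) T fun p => iterConv n fun j => h j p := by
  induction n with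
  | zero => exact hh 0
  | succ n ih =>
    exact (ih (hα.comp Fin.strictMono_castSucc.monotone) hpos fun i => hh i.castSucc).laplaceConv
      (hh _) (hpos.trans_le (hα (Fin.zero_le _))) (hα (Fin.le_last _)) hT

theorem stronglyMeasurable_intervalIntegral {X E : Type*} [MeasurableSpace X]
    [NormedAddCommGroup E] [NormedSpace ℝ E] {F : X → ℝ → E} {u v : X → ℝ} (hu : Measurable u)
    (hv : Measurable v) (hF : StronglyMeasurable (Function.uncurry F)) :
    StronglyMeasurable fun x => ∫ t in u x..v x, F x t := by
  have hIoc : ∀ {u v : X → ℝ}, Measurable u → Measurable v →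
      StronglyMeasurable fun x => ∫ t in Ioc (u x) (v x), F x t := fun {u v} hu hv => by
    have hS : MeasurableSet {q : X × ℝ | u q.1 < q.2 ∧ q.2 ≤ v q.1} :=
      (measurableSet_lt (hu.comp measurable_fst) measurable_snd).inter
        (measurableSet_le measurable_snd (hv.comp measurable_fst))
    simp only [← MeasureTheory.integral_indicator measurableSet_Ioc]
    exact (hF.indicator hS).integral_prod_right'
  exact (hIoc hu hv).sub (hIoc hv hu)

theorem measurable_laplaceConv {X : Type*} [MeasurableSpace X] {f g : X → ℝ → ℝ}
    (hf : Measurable (Function.uncurry f)) (hg : Measurable (Function.uncurry g)) :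
    Measurable (Function.uncurry fun p t => laplaceConv (f p) (g p) t) := by
  have hfg : Measurable (Function.uncurry fun (q : X × ℝ) τ => f q.1 τ * g q.1 (q.2 - τ)) :=
    (hf.comp (by fun_prop : Measurable fun q : (X × ℝ) × ℝ => (q.1.1, q.2))).mul
      (hg.comp (by fun_prop : Measurable fun q : (X × ℝ) × ℝ => (q.1.1, q.1.2 - q.2)))
  exact (stronglyMeasurable_intervalIntegral measurable_const measurable_snd
    hfg.stronglyMeasurable).measurable

theorem measurable_iterConv {X : Type*} [MeasurableSpace X] {n : ℕ}
    {h : Fin (n + 1) → X → ℝ → ℝ} (hh : ∀ j, Measurable (Function.uncurry (h j))) :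
    Measurable (Function.uncurry fun p t => iterConv n (fun j => h j p) t) := by
  induction n with
  | zero => exact hh 0
  | succ n ih => exact measurable_laplaceConv (ih fun i => hh i.castSucc) (hh _)

end Convolution

section KernelE

theorem isStableBounded_wrightW {a l : ℝ} (ha : 0 < a) (ha1 : a < 1) (hl : 0 < l) (T : ℝ) :
    IsStableBounded a T fun p t => t ^ (0 - 1 : ℝ) * wrightW a 0 (-(l * p) * t ^ (-a)) := by
  have hc := re_wrightDir_pos ha ha1
  set A := (wrightDir a).re ^ (-1 / a) * Gamma (1 / a + 1) / π
  set B := 2 / π * ((1 / (wrightDir a).re) ^ (a + 1) * Gamma (a + 1))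
  have hA : 0 < A := by positivity
  have hB : 0 < B := by positivity
  refine ⟨A * l ^ (-1 / a) + B * l, add_pos (by positivity) (mul_pos hB hl), fun p hp t ht => ?_⟩
  have ht0 : 0 < t := ht.1
  have hz : 0 < l * p * t ^ (-a) := by positivity
  rw [stableProfile, mul_min_of_nonneg _ _ (by positivity), abs_mul, neg_mul,
    abs_of_pos (rpow_pos_of_pos ht0 _)]
  refine le_min ?_ ?_
  · have hroot : (t ^ (-a)) ^ (-1 / a) = t := by
      rw [← rpow_mul ht0.le, neg_mul_comm, neg_div, neg_neg, mul_one_div_cancel ha.ne', rpow_one]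
    calc t ^ (0 - 1 : ℝ) * |wrightW a 0 (-(l * p * t ^ (-a)))|
        ≤ t ^ (0 - 1 : ℝ) * (A * (l * p * t ^ (-a)) ^ (-1 / a)) := by
          gcongr
          exact abs_wrightW_zero_neg_le_rpow ha ha1 hz
      _ = A * l ^ (-1 / a) * p ^ (-1 / a) := by
          rw [mul_rpow (by positivity) (by positivity), mul_rpow hl.le hp.le, hroot, zero_sub,
            rpow_neg_one]
          field_simp
      _ ≤ _ := by
          gcongr
          exact le_add_of_nonneg_right (by positivity)
  · calc t ^ (0 - 1 : ℝ) * |wrightW a 0 (-(l * p * t ^ (-a)))|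
        ≤ t ^ (0 - 1 : ℝ) * (B * (l * p * t ^ (-a))) := by
          gcongr
          exact abs_wrightW_zero_neg_le_mul ha ha1 hz.le
      _ = B * l * (p * t ^ (-a - 1)) := by
          rw [show -a - 1 = 0 - 1 + -a by ring, rpow_add ht0]
          ring
      _ ≤ _ := by
          gcongr
          exact le_add_of_nonneg_left (by positivity)

theorem Sconv_zero_eq {n : ℕ} (α l : Fin (n + 1) → ℝ) :
    Sconv n 0 α l =
      iterConv n fun j t => t ^ (0 - 1 : ℝ) * wrightW (α j) 0 (-l j * t ^ (-α j)) := by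
  simp only [Sconv, ite_self]

variable {n : ℕ} {α lam : Fin (n + 1) → ℝ}

theorem isStableBounded_Sconv_zero (hα : Monotone α) (hpos : ∀ j, 0 < α j) (hlt1 : ∀ j, α j < 1)
    (hlam : ∀ j, 0 < lam j) {T : ℝ} (hT : 0 < T) :
    IsStableBounded (α (Fin.last n)) T fun p => Sconv n 0 α fun j => lam j * p := by
  simp only [Sconv_zero_eq]
  exact .iterConv hT hα (hpos 0) fun j => isStableBounded_wrightW (hpos j) (hlt1 j) (hlam j) T

theorem measurable_Sconv_zero (hpos : ∀ j, 0 < α j) (hlt1 : ∀ j, α j < 1) :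
    Measurable (Function.uncurry fun l t => Sconv n 0 α l t) := by
  simp only [Sconv_zero_eq]
  exact measurable_iterConv fun j =>
    .mul (by fun_prop) ((measurable_wrightW_zero (hpos j) (hlt1 j)).comp (by fun_prop))

theorem measurable_kerE (hpos : ∀ j, 0 < α j) (hlt1 : ∀ j, α j < 1) :
    Measurable (Function.uncurry (kerE n α lam)) := by
  have hS : Measurable fun q : (ℝ × ℝ) × ℝ => Sconv n 0 α (fun j => lam j * q.2) q.1.2 :=
    (measurable_Sconv_zero hpos hlt1).comp
      (by fun_prop : Measurable fun q : (ℝ × ℝ) × ℝ => (fun j => lam j * q.2, q.1.2))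
  have hF : Measurable fun q : (ℝ × ℝ) × ℝ => q.2 ^ (-(1 / 2 : ℝ)) *
      rexp (-(|q.1.1| ^ 2) / (4 * q.2)) * Sconv n 0 α (fun j => lam j * q.2) q.1.2 :=
    .mul (by fun_prop) hS
  exact (hF.stronglyMeasurable.integral_prod_right' (ν := volume.restrict (Ioi 0))).measurable
    |>.const_mul _

theorem exists_abs_kerE_le (hα : Monotone α) (hpos : ∀ j, 0 < α j) (hlt1 : ∀ j, α j < 1)
    (hlam : ∀ j, 0 < lam j) {T : ℝ} (hT : 0 < T) :
    ∃ K > 0, ∀ x, ∀ t ∈ Ioc 0 T, |kerE n α lam x t| ≤ K * t ^ (α (Fin.last n) / 2 - 1) := by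
  obtain ⟨A, hA, hS⟩ := isStableBounded_Sconv_zero hα hpos hlt1 hlam hT
  have ha := hpos (Fin.last n)
  have hainv := one_lt_one_div ha (hlt1 (Fin.last n))
  set a := α (Fin.last n)
  set D := 1 / (-(1 / 2 : ℝ) + 2) + 1 / (1 / a - (-(1 / 2) + 1))
  have hD0 : 0 < D := add_pos (by norm_num) (one_div_pos.2 (by linarith))
  refine ⟨(4 * π) ^ (-(1 / 2 : ℝ)) * (A * D), by positivity, fun x t ht => ?_⟩
  have hbound : ∀ p ∈ Ioi (0 : ℝ), ‖p ^ (-(1 / 2 : ℝ)) * rexp (-(|x| ^ 2) / (4 * p)) *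
      Sconv n 0 α (fun j => lam j * p) t‖ ≤
        A * (p ^ (-(1 / 2 : ℝ)) * stableProfile a p t) := fun p (hp : 0 < p) => by
    have hgauss : rexp (-(|x| ^ 2) / (4 * p)) ≤ 1 := by
      rw [exp_le_one_iff, neg_div, neg_nonpos]
      positivity
    rw [norm_mul, norm_mul, norm_of_nonneg (exp_pos _).le, norm_of_nonneg (by positivity)]
    calc _ ≤ p ^ (-(1 / 2 : ℝ)) * 1 * (A * stableProfile a p t) := by
          gcongr
          exact hS p hp t ht
      _ = _ := by ring
  have hint := integrableOn_rpow_mul_stableProfile (a := a) (q := -(1 / 2)) (by norm_num)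
    (by linarith) ht.1
  have hle := integral_rpow_mul_stableProfile_le ha (q := -(1 / 2)) (by norm_num)
    (by linarith) ht.1
  rw [kerE, Gam1, abs_mul, abs_of_pos (by positivity), mul_assoc]
  gcongr
  calc _ ≤ ∫ p in Ioi 0, A * (p ^ (-(1 / 2 : ℝ)) * stableProfile a p t) :=
        norm_integral_le_of_norm_le (hint.const_mul A)
          (ae_restrict_of_forall_mem measurableSet_Ioi hbound)
    _ ≤ A * (D * t ^ (a * (-(1 / 2) + 1) - 1)) := by
        rw [MeasureTheory.integral_const_mul]
        gcongr
    _ = A * D * t ^ (a / 2 - 1) := by ring_nf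

end KernelE

section BetaIntegral

variable {u v t : ℝ}

theorem integral_rpow_mul_sub_rpow (hu : 0 < u) (hv : 0 < v) (ht : 0 < t) :
    ∫ τ in 0..t, τ ^ (u - 1) * (t - τ) ^ (v - 1) =
      t ^ (u + v - 1) * ProbabilityTheory.beta u v := by
  apply Complex.ofReal_injective
  have hcpow : ∀ τ ∈ uIcc 0 t, ((τ ^ (u - 1) * (t - τ) ^ (v - 1) : ℝ) : ℂ) =
      (τ : ℂ) ^ ((u : ℂ) - 1) * ((t : ℂ) - τ) ^ ((v : ℂ) - 1) := fun τ hτ => by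
    rw [uIcc_of_le ht.le] at hτ
    rw [Complex.ofReal_mul, Complex.ofReal_cpow hτ.1, Complex.ofReal_cpow (sub_nonneg.2 hτ.2)]
    push_cast
    rfl
  rw [← intervalIntegral.integral_ofReal, intervalIntegral.integral_congr hcpow,
    Complex.betaIntegral_scaled _ _ ht, Complex.betaIntegral_eq_Gamma_mul_div _ _ (by simpa)
      (by simpa), ProbabilityTheory.beta, Complex.ofReal_mul, Complex.ofReal_cpow ht.le]
  push_cast [← Complex.Gamma_ofReal]
  rfl

theorem integrableOn_rpow_mul_sub_rpow (hu : 0 < u) (hv : 0 < v) (ht : 0 < t) :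
    IntegrableOn (fun τ => τ ^ (u - 1) * (t - τ) ^ (v - 1)) (Ioc 0 t) := by
  have hbeta := ProbabilityTheory.beta_pos hu hv
  refine (intervalIntegrable_iff_integrableOn_Ioc_of_le ht.le).1
    (not_imp_comm.1 intervalIntegral.integral_undef ?_)
  rw [integral_rpow_mul_sub_rpow hu hv ht]
  positivity

variable {φ k : ℝ → ℝ} {M K : ℝ}

theorem abs_mul_le_of_abs_le_rpow (hφ : ∀ τ ∈ Ioo 0 t, |φ τ| ≤ M * τ ^ (u - 1))
    (hk : ∀ τ ∈ Ioo 0 t, |k τ| ≤ K * (t - τ) ^ (v - 1)) :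
    ∀ᵐ τ ∂volume.restrict (Ioc 0 t),
      |φ τ * k τ| ≤ M * K * (τ ^ (u - 1) * (t - τ) ^ (v - 1)) := by
  rw [← restrict_Ioo_eq_restrict_Ioc]
  filter_upwards [ae_restrict_mem measurableSet_Ioo] with τ hτ
  rw [abs_mul, mul_mul_mul_comm]
  exact mul_le_mul (hφ τ hτ) (hk τ hτ) (abs_nonneg _) ((abs_nonneg _).trans (hφ τ hτ))

theorem integrableOn_mul_of_abs_le_rpow (hu : 0 < u) (hv : 0 < v) (ht : 0 < t)
    (hφm : AEStronglyMeasurable φ (volume.restrict (Ioc 0 t)))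
    (hkm : AEStronglyMeasurable k (volume.restrict (Ioc 0 t)))
    (hφ : ∀ τ ∈ Ioo 0 t, |φ τ| ≤ M * τ ^ (u - 1))
    (hk : ∀ τ ∈ Ioo 0 t, |k τ| ≤ K * (t - τ) ^ (v - 1)) :
    IntegrableOn (fun τ => φ τ * k τ) (Ioc 0 t) :=
  ((integrableOn_rpow_mul_sub_rpow hu hv ht).const_mul (M * K)).mono' (hφm.mul hkm)
    (abs_mul_le_of_abs_le_rpow hφ hk)

theorem integral_abs_mul_le_of_abs_le_rpow (hu : 0 < u) (hv : 0 < v) (ht : 0 < t)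
    (hφ : ∀ τ ∈ Ioo 0 t, |φ τ| ≤ M * τ ^ (u - 1))
    (hk : ∀ τ ∈ Ioo 0 t, |k τ| ≤ K * (t - τ) ^ (v - 1)) :
    ∫ τ in Ioc 0 t, |φ τ * k τ| ≤ M * K * (t ^ (u + v - 1) * ProbabilityTheory.beta u v) := by
  rw [← integral_rpow_mul_sub_rpow hu hv ht, intervalIntegral.integral_of_le ht.le,
    ← MeasureTheory.integral_const_mul]
  exact integral_mono_of_nonneg (.of_forall fun τ => abs_nonneg _)
    ((integrableOn_rpow_mul_sub_rpow hu hv ht).const_mul (M * K)) (abs_mul_le_of_abs_le_rpow hφ hk)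

end BetaIntegral

section WeightedDensity

variable {φ ψ : ℝ → ℝ} {a T : ℝ}

theorem bddAbove_range_abs_rpow_mul (hψ : ContinuousOn ψ (Icc 0 T))
    (hφψ : ∀ t ∈ Ioc 0 T, ψ t = t ^ (1 - a) * φ t) :
    BddAbove (range fun τ : Ioo 0 T => |(τ : ℝ) ^ (1 - a) * φ τ|) := by
  obtain ⟨R, hR⟩ := isCompact_Icc.exists_bound_of_continuousOn hψ
  refine ⟨R, forall_mem_range.2 fun τ => ?_⟩
  rw [← hφψ τ (Ioo_subset_Ioc_self τ.2)]
  exact hR τ (Ioo_subset_Icc_self τ.2)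

theorem eq_rpow_mul_rpow_mul {τ : ℝ} (hτ : 0 < τ) (y : ℝ) :
    y = τ ^ (a - 1) * (τ ^ (1 - a) * y) := by
  rw [← mul_assoc, ← rpow_add hτ, sub_add_sub_cancel, sub_self, rpow_zero, one_mul]

theorem aemeasurable_of_continuousOn_rpow_mul (hψ : ContinuousOn ψ (Icc 0 T))
    (hφψ : ∀ t ∈ Ioc 0 T, ψ t = t ^ (1 - a) * φ t) :
    AEMeasurable φ (volume.restrict (Ioo 0 T)) := by
  have hmul : AEMeasurable (fun τ => τ ^ (a - 1) * ψ τ) (volume.restrict (Ioo 0 T)) :=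
    .mul (by fun_prop) ((hψ.mono Ioo_subset_Icc_self).aemeasurable measurableSet_Ioo)
  refine hmul.congr ((ae_restrict_mem measurableSet_Ioo).mono fun τ hτ => ?_)
  simp only [hφψ τ (Ioo_subset_Ioc_self hτ), ← eq_rpow_mul_rpow_mul hτ.1]

theorem abs_le_iSup_mul_rpow
    (hφ : BddAbove (range fun τ : Ioo 0 T => |(τ : ℝ) ^ (1 - a) * φ τ|)) {τ : ℝ}
    (hτ : τ ∈ Ioo 0 T) :
    |φ τ| ≤ (⨆ τ : Ioo 0 T, |(τ : ℝ) ^ (1 - a) * φ τ|) * τ ^ (a - 1) := by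
  have hpow : 0 < τ ^ (a - 1) := rpow_pos_of_pos hτ.1 _
  calc |φ τ| = |τ ^ (1 - a) * φ τ| * τ ^ (a - 1) := by
        conv_lhs => rw [eq_rpow_mul_rpow_mul (a := a) hτ.1 (φ τ)]
        rw [abs_mul, abs_of_pos hpow, mul_comm]
    _ ≤ _ := by
        gcongr
        exact le_ciSup hφ ⟨τ, hτ⟩

end WeightedDensity

theorem E_potential_integrand_integrable_general {m : ℕ} {α lam : Fin (m + 1) → ℝ}
    (hα : Monotone α) (hpos : ∀ j, 0 < α j) (hlt1 : ∀ j, α j < 1) (hlam : ∀ j, 0 < lam j)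
    {T : ℝ} (hT : 0 < T) :
    ∃ C > 0, ∀ s φ : ℝ → ℝ, AEMeasurable s (volume.restrict (Ioo 0 T)) →
      AEMeasurable φ (volume.restrict (Ioo 0 T)) →
      BddAbove (range fun τ : Ioo 0 T => |(τ : ℝ) ^ (1 - α (Fin.last m)) * φ τ|) →
      ∀ t ∈ Ioc 0 T, ∀ x,
        IntegrableOn (fun τ => φ τ * kerE m α lam (x - s τ) (t - τ)) (Ioc 0 t) ∧
        ∫ τ in Ioc 0 t, |φ τ * kerE m α lam (x - s τ) (t - τ)| ≤
          C * (⨆ τ : Ioo 0 T, |(τ : ℝ) ^ (1 - α (Fin.last m)) * φ τ|) *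
            t ^ (3 * α (Fin.last m) / 2 - 1) *
            ProbabilityTheory.beta (α (Fin.last m)) (α (Fin.last m) / 2) := by
  obtain ⟨K, hK, hE⟩ := exists_abs_kerE_le hα hpos hlt1 hlam hT
  refine ⟨K, hK, fun s φ hs hφ hbdd t ⟨ht, htT⟩ x => ?_⟩
  have ha := hpos (Fin.last m)
  have hmono : volume.restrict (Ioc 0 t) ≤ volume.restrict (Ioo 0 T) := by
    rw [← restrict_Ioo_eq_restrict_Ioc]
    exact Measure.restrict_mono_set _ (Ioo_subset_Ioo_right htT)
  have hkm : AEMeasurable (fun τ => kerE m α lam (x - s τ) (t - τ)) (volume.restrict (Ioc 0 t)) :=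
    (measurable_kerE hpos hlt1).comp_aemeasurable (f := fun τ => (x - s τ, t - τ))
      (((hs.mono_measure hmono).const_sub x).prodMk (by fun_prop))
  have hφle := fun τ (hτ : τ ∈ Ioo 0 t) =>
    abs_le_iSup_mul_rpow hbdd (Ioo_subset_Ioo_right htT hτ)
  have hkle := fun τ (hτ : τ ∈ Ioo 0 t) =>
    hE (x - s τ) (t - τ) ⟨sub_pos.2 hτ.2, by linarith [hτ.1]⟩
  refine ⟨integrableOn_mul_of_abs_le_rpow ha (half_pos ha) ht
    (hφ.mono_measure hmono).aestronglyMeasurable hkm.aestronglyMeasurable hφle hkle, ?_⟩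
  calc _ ≤ _ := integral_abs_mul_le_of_abs_le_rpow ha (half_pos ha) ht hφle hkle
    _ = _ := by ring_nf

/-- Integrability of the `E`-potential integrand, with the explicit bound
`∫₀ᵗ |φ(τ) E(x - s(τ), t - τ)| dτ ≤
  C ⋅ sup_{τ∈(0,T)} |τ^{1-α_m} φ(τ)| ⋅ t^{3α_m/2 - 1} B(α_m, α_m/2)`,
where `B(a,b) = Γ(a)Γ(b)/Γ(a+b)` is the Euler Beta function and `C` does not
depend on `x`, `t` or `φ`. -/
theorem E_potential_integrand_integrable
    (m : ℕ) (α lam : Fin (m + 1) → ℝ)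
    (hmono : StrictMono α) (hpos : ∀ j, 0 < α j) (hlt1 : ∀ j, α j < 1)
    (hlam : ∀ j, 0 < lam j)
    (T : ℝ) (hT : 0 < T) (s : ℝ → ℝ) (hs : ContinuousOn s (Set.Icc 0 T)) :
    ∃ C > (0:ℝ), ∀ φ : ℝ → ℝ,
      (∃ ψ : ℝ → ℝ, ContinuousOn ψ (Set.Icc 0 T) ∧
        ∀ t ∈ Set.Ioc (0:ℝ) T, ψ t = t ^ (1 - α (Fin.last m)) * φ t) →
      ∀ t ∈ Set.Ioc (0:ℝ) T, ∀ x : ℝ, x ≠ s t →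
        MeasureTheory.IntegrableOn
          (fun τ => φ τ * kerE m α lam (x - s τ) (t - τ)) (Set.Ioc 0 t) ∧
        ∫ τ in Set.Ioc (0:ℝ) t, |φ τ * kerE m α lam (x - s τ) (t - τ)| ≤
          C * (⨆ τ : Set.Ioo (0:ℝ) T, |(τ : ℝ) ^ (1 - α (Fin.last m)) * φ τ|) *
            t ^ (3 * α (Fin.last m) / 2 - 1) *
            (Real.Gamma (α (Fin.last m)) * Real.Gamma (α (Fin.last m) / 2) /
              Real.Gamma (α (Fin.last m) + α (Fin.last m) / 2)) := by
  obtain ⟨C, hC, hbound⟩ :=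
    E_potential_integrand_integrable_general hmono.monotone hpos hlt1 hlam hT
  exact ⟨C, hC, fun φ ⟨ψ, hψ, hφψ⟩ t ht x _ =>
    hbound s φ ((hs.mono Ioo_subset_Icc_self).aemeasurable measurableSet_Ioo)
      (aemeasurable_of_continuousOn_rpow_mul hψ hφψ) (bddAbove_range_abs_rpow_mul hψ hφψ) t ht x⟩
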